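/- Let a ∈ (0,1] and let θ ∈ C¹((0,∞)) with r ↦ r θ'(r) bounded on (0,∞). For s ≥ 0 define θ_s'(ρ) := e^{s/2} θ'(e^{s/2} ρ) and the quadratic forms l_s[φ] := ∫_U [ |∂_ρφ − θ_s'(ρ)∂_φφ|² + |∂_φφ|²/ρ² + (ρ²/16) |φ|² ] ρ dρ dφ and l[φ] := ∫_U [ |∂_ρφ|² + |∂_φφ|²/ρ² + (ρ²/16) |φ|² ] ρ dρ dφ. Then there exists a constant C ≥ 1, independent of s, such that C⁻¹ l[φ] ≤ l_s[φ] ≤ C l[φ] for every φ ∈ C¹_c(U) and every s ≥ 0. -/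

import Mathlib

open MeasureTheory Real Set

noncomputable section

/-- The half-strip `U = (0,∞) × (0,2πa)` of curvilinear coordinates `(ρ,φ)`. -/
def wedgeU (a : ℝ) : Set (ℝ × ℝ) := Ioi (0:ℝ) ×ˢ Ioo (0:ℝ) (2 * π * a)

/-!
Since `∂_ρψ - g ∂_φψ = (∂_ρψ - f ∂_φψ) - (g - f) ∂_φψ`, changing the shear from `f` to `g` adds
a term whose square is at most `B² |∂_φψ|² / ρ²` with `B = sup_ρ |ρ (g ρ - f ρ)|`, that is, at most
`B²` times the angular part of the energy. For `f = 0` and `g = θ_s'`, in either order, this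
supremum is `sup_r |r θ'(r)|`, whatever `s` is. Likewise the energy density of `g` is dominated by
the one of `0`, and so it is integrable as soon as `g` is measurable, which a derivative always is.
-/

/-- The energy density with respect to `dρ dφ` of `ψ`, in which the shear `g` replaces the radial
derivative `∂_ρ` by `∂_ρ - g(ρ) ∂_φ`. The last factor `p.1` is the polar Jacobian `ρ`. -/
def shearedDensity (g : ℝ → ℝ) (ψ : ℝ × ℝ → ℝ) (p : ℝ × ℝ) : ℝ :=
  ((fderiv ℝ ψ p (1, 0) - g p.1 * fderiv ℝ ψ p (0, 1)) ^ 2 + (fderiv ℝ ψ p (0, 1)) ^ 2 / p.1 ^ 2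
    + p.1 ^ 2 / 16 * (ψ p) ^ 2) * p.1

/-- The quadratic form with shear `g` on the domain `Ω`: it is `l` for `g = 0` and `l_s` for
`g = θ_s'`. -/
def shearedForm (Ω : Set (ℝ × ℝ)) (g : ℝ → ℝ) (ψ : ℝ × ℝ → ℝ) : ℝ :=
  ∫ p in Ω, shearedDensity g ψ p

/-- The derivative of `r ↦ θ (c * r)` in terms of the derivative `θ'` of `θ`; the function `θ_s'`
is the case `c = e^{s/2}`. -/
def rescaledDeriv (c : ℝ) (θ' : ℝ → ℝ) (r : ℝ) : ℝ := c * θ' (c * r)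

theorem hasDerivAt_rescaledDeriv {θ θ' : ℝ → ℝ} {c r : ℝ}
    (h : HasDerivAt θ (θ' (c * r)) (c * r)) :
    HasDerivAt (fun x => θ (c * x)) (rescaledDeriv c θ' r) r :=
  h.scomp r (hasDerivAt_const_mul c)

theorem abs_mul_rescaledDeriv_le {θ' : ℝ → ℝ} {B c r : ℝ} (hB : ∀ x ∈ Ioi (0 : ℝ), |x * θ' x| ≤ B)
    (hc : 0 < c) (hr : 0 < r) : |r * rescaledDeriv c θ' r| ≤ B := by
  have hscale : r * rescaledDeriv c θ' r = c * r * θ' (c * r) := by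
    rw [rescaledDeriv]; ring
  exact hscale ▸ hB (c * r) (mul_pos hc hr)

theorem aemeasurable_restrict_of_hasDerivAt {F : Type*} [NormedAddCommGroup F] [NormedSpace ℝ F]
    [CompleteSpace F] [MeasurableSpace F] [BorelSpace F] {f f' : ℝ → F} {μ : Measure ℝ} {S : Set ℝ}
    (hS : MeasurableSet S) (h : ∀ r ∈ S, HasDerivAt f (f' r) r) :
    AEMeasurable f' (μ.restrict S) :=
  (measurable_deriv f).aemeasurable.congr <|
    (ae_restrict_mem hS).mono fun r hr => (h r hr).deriv

theorem sq_sub_mul_add_sq_div_le {B d r w : ℝ} (x y : ℝ) (hr : r ≠ 0) (hd : |r * d| ≤ B)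
    (hw : 0 ≤ w) :
    (x - d * y) ^ 2 + y ^ 2 / r ^ 2 + w ≤ (2 + 2 * B ^ 2) * (x ^ 2 + y ^ 2 / r ^ 2 + w) := by
  have hsq : (r * d) ^ 2 ≤ B ^ 2 := sq_le_sq' (abs_le.1 hd).1 (abs_le.1 hd).2
  have hshear : (d * y) ^ 2 ≤ B ^ 2 * (y ^ 2 / r ^ 2) := by
    calc (d * y) ^ 2 = (r * d) ^ 2 * (y ^ 2 / r ^ 2) := by field_simp
      _ ≤ B ^ 2 * (y ^ 2 / r ^ 2) := by gcongr
  calc (x - d * y) ^ 2 + y ^ 2 / r ^ 2 + w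
      ≤ 2 * (x ^ 2 + (d * y) ^ 2) + y ^ 2 / r ^ 2 + w := by
        gcongr; linarith [sq_nonneg (x + d * y)]
    _ ≤ 2 * (x ^ 2 + B ^ 2 * (y ^ 2 / r ^ 2)) + y ^ 2 / r ^ 2 + w := by gcongr
    _ ≤ (2 + 2 * B ^ 2) * (x ^ 2 + y ^ 2 / r ^ 2 + w) := by
        have : 0 ≤ 2 * B ^ 2 * (x ^ 2 + w) + y ^ 2 / r ^ 2 + w := by positivity
        linarith

section Sheared

variable {Ω : Set (ℝ × ℝ)} {f g : ℝ → ℝ} {ψ : ℝ × ℝ → ℝ} {B : ℝ}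

theorem shearedDensity_nonneg {p : ℝ × ℝ} (hp : 0 ≤ p.1) : 0 ≤ shearedDensity g ψ p := by
  unfold shearedDensity
  positivity

theorem shearedDensity_le_mul {p : ℝ × ℝ} (hp : 0 < p.1) (hB : |p.1 * (g p.1 - f p.1)| ≤ B) :
    shearedDensity g ψ p ≤ (2 + 2 * B ^ 2) * shearedDensity f ψ p := by
  have hpot : 0 ≤ p.1 ^ 2 / 16 * (ψ p) ^ 2 := by positivity
  have h := sq_sub_mul_add_sq_div_le (fderiv ℝ ψ p (1, 0) - f p.1 * fderiv ℝ ψ p (0, 1))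
    (fderiv ℝ ψ p (0, 1)) hp.ne' hB hpot
  rw [sub_sub, ← add_mul, add_sub_cancel] at h
  rw [shearedDensity, shearedDensity, ← mul_assoc]
  gcongr

theorem support_shearedDensity_subset_tsupport :
    Function.support (shearedDensity g ψ) ⊆ tsupport ψ := by
  intro p hp
  by_contra hnot
  have hval : ψ p = 0 := image_eq_zero_of_notMem_tsupport hnot
  have hderiv : fderiv ℝ ψ p = 0 :=
    image_eq_zero_of_notMem_tsupport fun h => hnot (tsupport_fderiv_subset ℝ h)
  exact hp (by simp [shearedDensity, hval, hderiv])

theorem continuousOn_shearedDensity_zero (hψ : ContDiff ℝ 1 ψ) :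
    ContinuousOn (shearedDensity 0 ψ) {p | p.1 ≠ 0} := by
  have : Continuous (fderiv ℝ ψ) := hψ.continuous_fderiv one_ne_zero
  have : Continuous ψ := hψ.continuous
  unfold shearedDensity
  simp only [Pi.zero_apply, zero_mul, sub_zero]
  fun_prop (disch := simp_all)

theorem integrable_shearedDensity_zero (hψ : ContDiff ℝ 1 ψ) (hcomp : HasCompactSupport ψ)
    (hsupp : ∀ p ∈ tsupport ψ, p.1 ≠ 0) : Integrable (shearedDensity 0 ψ) := by
  rw [← integrableOn_iff_integrable_of_support_subset support_shearedDensity_subset_tsupport]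
  exact ((continuousOn_shearedDensity_zero hψ).mono hsupp).integrableOn_compact hcomp

theorem aemeasurable_shearedDensity {S : Set ℝ} (hΩ : MapsTo Prod.fst Ω S)
    (hg : AEMeasurable g (volume.restrict S)) (hψ : Measurable ψ) :
    AEMeasurable (shearedDensity g ψ) (volume.restrict Ω) := by
  have hfst : Measure.QuasiMeasurePreserving Prod.fst (volume.restrict Ω) (volume.restrict S) :=
    Measure.quasiMeasurePreserving_fst.restrict hΩ
  have : AEMeasurable (fun p : ℝ × ℝ => g p.1) (volume.restrict Ω) :=
    hg.comp_quasiMeasurePreserving hfst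
  have : Measurable (fderiv ℝ ψ) := measurable_fderiv ℝ ψ
  unfold shearedDensity
  fun_prop

theorem integrableOn_shearedDensity (hΩm : MeasurableSet Ω) (hΩ : ∀ p ∈ Ω, 0 < p.1)
    (hg : AEMeasurable g (volume.restrict (Ioi 0))) (hB : ∀ r ∈ Ioi (0 : ℝ), |r * g r| ≤ B)
    (hψ : ContDiff ℝ 1 ψ) (hcomp : HasCompactSupport ψ) (hsupp : ∀ p ∈ tsupport ψ, p.1 ≠ 0) :
    IntegrableOn (shearedDensity g ψ) Ω := by
  have hmeas : AEMeasurable (shearedDensity g ψ) (volume.restrict Ω) :=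
    aemeasurable_shearedDensity hΩ hg hψ.continuous.measurable
  have hdom : IntegrableOn (fun p => (2 + 2 * B ^ 2) * shearedDensity 0 ψ p) Ω :=
    (integrable_shearedDensity_zero hψ hcomp hsupp).integrableOn.const_mul _
  refine hdom.mono' hmeas.aestronglyMeasurable ?_
  filter_upwards [ae_restrict_mem hΩm] with p hp
  rw [norm_of_nonneg (shearedDensity_nonneg (hΩ p hp).le)]
  exact shearedDensity_le_mul (hΩ p hp) (by simpa using hB p.1 (hΩ p hp))

theorem shearedForm_le_mul (hΩm : MeasurableSet Ω) (hΩ : ∀ p ∈ Ω, 0 < p.1)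
    (hB : ∀ r ∈ Ioi (0 : ℝ), |r * (g r - f r)| ≤ B)
    (hf : IntegrableOn (shearedDensity f ψ) Ω) :
    shearedForm Ω g ψ ≤ (2 + 2 * B ^ 2) * shearedForm Ω f ψ := by
  rw [shearedForm, shearedForm, ← integral_const_mul]
  refine integral_mono_of_nonneg ?_ (hf.const_mul _) ?_ <;>
    filter_upwards [ae_restrict_mem hΩm] with p hp
  · exact shearedDensity_nonneg (hΩ p hp).le
  · exact shearedDensity_le_mul (hΩ p hp) (hB p.1 (hΩ p hp))

end Sheared

theorem self_similar_forms_comparable_general {Ω : Set (ℝ × ℝ)} (hΩm : MeasurableSet Ω)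
    (hΩ : ∀ p ∈ Ω, 0 < p.1) {θ θ' : ℝ → ℝ} (hderiv : ∀ r ∈ Ioi (0 : ℝ), HasDerivAt θ (θ' r) r)
    {B : ℝ} (hB : ∀ r ∈ Ioi (0 : ℝ), |r * θ' r| ≤ B) :
    ∃ C ≥ (1 : ℝ), ∀ c > (0 : ℝ), ∀ ψ : ℝ × ℝ → ℝ,
      ContDiff ℝ 1 ψ → HasCompactSupport ψ → (∀ p ∈ tsupport ψ, p.1 ≠ 0) →
      C⁻¹ * shearedForm Ω 0 ψ ≤ shearedForm Ω (rescaledDeriv c θ') ψ ∧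
        shearedForm Ω (rescaledDeriv c θ') ψ ≤ C * shearedForm Ω 0 ψ := by
  refine ⟨2 + 2 * B ^ 2, by linarith [sq_nonneg B], fun c hc ψ hψ hcomp hsupp => ?_⟩
  have hbound : ∀ r ∈ Ioi (0 : ℝ), |r * rescaledDeriv c θ' r| ≤ B :=
    fun r hr => abs_mul_rescaledDeriv_le hB hc hr
  have hmeas : AEMeasurable (rescaledDeriv c θ') (volume.restrict (Ioi 0)) :=
    aemeasurable_restrict_of_hasDerivAt measurableSet_Ioi
      fun r hr => hasDerivAt_rescaledDeriv (hderiv (c * r) (mul_pos hc hr))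
  constructor
  · rw [inv_mul_le_iff₀ (by positivity)]
    exact shearedForm_le_mul hΩm hΩ (by simpa using hbound)
      (integrableOn_shearedDensity hΩm hΩ hmeas hbound hψ hcomp hsupp)
  · exact shearedForm_le_mul hΩm hΩ (by simpa using hbound)
      (integrable_shearedDensity_zero hψ hcomp hsupp).integrableOn

/-- **Uniform comparability of the self-similar quadratic forms `l_s` and `l`.**
If `ρ θ'(ρ)` is bounded, then with `θ_s'(ρ) = e^{s/2} θ'(e^{s/2}ρ)` there is `C ≥ 1`,
independent of `s`, such that `C⁻¹ l[φ] ≤ l_s[φ] ≤ C l[φ]` for all `φ ∈ C¹_c(U)`, `s ≥ 0`. -/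
theorem self_similar_forms_comparable
    (a : ℝ) (ha : a ∈ Ioc (0:ℝ) 1)
    (θ θ' : ℝ → ℝ)
    (hderiv : ∀ r ∈ Ioi (0:ℝ), HasDerivAt θ (θ' r) r)
    (hcont : ContinuousOn θ' (Ioi 0))
    (B : ℝ) (hB : ∀ r ∈ Ioi (0:ℝ), |r * θ' r| ≤ B) :
    ∃ C ≥ (1:ℝ), ∀ s ≥ (0:ℝ), ∀ ψ : ℝ × ℝ → ℝ,
      ContDiff ℝ 1 ψ → HasCompactSupport ψ → tsupport ψ ⊆ wedgeU a →
      C⁻¹ * (∫ p in wedgeU a,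
              ((fderiv ℝ ψ p (1, 0)) ^ 2 + (fderiv ℝ ψ p (0, 1)) ^ 2 / p.1 ^ 2
                + p.1 ^ 2 / 16 * (ψ p) ^ 2) * p.1)
          ≤ (∫ p in wedgeU a,
              ((fderiv ℝ ψ p (1, 0)
                  - Real.exp (s / 2) * θ' (Real.exp (s / 2) * p.1)
                    * fderiv ℝ ψ p (0, 1)) ^ 2
                + (fderiv ℝ ψ p (0, 1)) ^ 2 / p.1 ^ 2
                + p.1 ^ 2 / 16 * (ψ p) ^ 2) * p.1)
        ∧ (∫ p in wedgeU a,
              ((fderiv ℝ ψ p (1, 0)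
                  - Real.exp (s / 2) * θ' (Real.exp (s / 2) * p.1)
                    * fderiv ℝ ψ p (0, 1)) ^ 2
                + (fderiv ℝ ψ p (0, 1)) ^ 2 / p.1 ^ 2
                + p.1 ^ 2 / 16 * (ψ p) ^ 2) * p.1)
          ≤ C * (∫ p in wedgeU a,
              ((fderiv ℝ ψ p (1, 0)) ^ 2 + (fderiv ℝ ψ p (0, 1)) ^ 2 / p.1 ^ 2
                + p.1 ^ 2 / 16 * (ψ p) ^ 2) * p.1) := by
  obtain ⟨C, hC, h⟩ := self_similar_forms_comparable_general
    (Ω := wedgeU a) (measurableSet_Ioi.prod measurableSet_Ioo) (fun _ hp => hp.1) hderiv hB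
  refine ⟨C, hC, fun s _ ψ hψ hcomp hsupp => ?_⟩
  simpa only [shearedForm, shearedDensity, rescaledDeriv, Pi.zero_apply, zero_mul, sub_zero] using
    h (exp (s / 2)) (exp_pos _) ψ hψ hcomp fun p hp => (hsupp hp).1.ne'
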